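/- arXiv:2509.02963 — 8 statements merged into one kernel-verified Lean document; each statement's English description precedes it below -/
import Mathlib

section
/- A subset S ⊆ E is linearly independent (i.e. δ(T) ≥ 0 for every T ⊆ S) if and only if there exists a family of vectors (v_i)_{i ∈ S} with v_i ∈ L_i for every i ∈ S that is linearly independent in V. -/
/-!
This is Rado's theorem on independent transversals, for subspaces in place of sets of vectors.

A linearly independent choice of vectors forces every defect to be non-negative by comparing
dimensions. For the converse, shrink the subspaces one at a time while keeping all defects
non-negative. If some `L i` has dimension at least two, write it as `A ⊔ B` with `A, B` proper.
If neither `A` nor `B` could replace `L i`, there would be index sets `T, U` avoiding `i` with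
`dim (L(T) + A) ≤ |T|` and `dim (L(U) + B) ≤ |U|`; the sum and intersection of these two spaces
contain `L(T ∪ U ∪ {i})` and `L(T ∩ U)`, so the dimension formula gives
`|T ∪ U| + 1 + |T ∩ U| ≤ |T| + |U|`, which is absurd (`indep_update_or`). The process ends with
all `L i` of dimension at most one, where spanning vectors of the `L i` are the required family.
-/

namespace Mink

variable (K : Type*) [Field K] {V : Type*} [AddCommGroup V] [Module K V] {ι : Type*}

/-- The defect of a subset `S` of the index set: `dim ⟨S⟩ - |S|`,
where `⟨S⟩ = ∑ i ∈ S, L i`. -/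
noncomputable def defect (L : ι → Submodule K V) (S : Finset ι) : ℤ :=
  (Module.finrank K ↥(S.sup L) : ℤ) - S.card

/-- `S` is linearly independent in the sense of Minkowski:
every subset of `S` has non-negative defect. -/
def Indep (L : ι → Submodule K V) (S : Finset ι) : Prop :=
  ∀ T ⊆ S, 0 ≤ defect K L T

/-- A BK-set: a linearly independent subset with defect 0. -/
def BKSet (L : ι → Submodule K V) (S : Finset ι) : Prop :=
  Indep K L S ∧ defect K L S = 0

/-- A circuit: a minimal-by-inclusion linearly dependent subset. -/
def Circuit (L : ι → Submodule K V) (C : Finset ι) : Prop :=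
  ¬ Indep K L C ∧ ∀ T ⊂ C, Indep K L T

/-- A basis: a maximal-by-inclusion linearly independent subset. -/
def IsBasisSet (L : ι → Submodule K V) (B : Finset ι) : Prop :=
  Indep K L B ∧ ∀ S : Finset ι, Indep K L S → B ⊆ S → S = B

open Classical in
/-- The Minkowski rank: the maximal cardinality of a linearly independent subset. -/
noncomputable def minkRank [Fintype ι] (L : ι → Submodule K V) : ℕ :=
  ((Finset.univ : Finset (Finset ι)).filter fun S => Indep K L S).sup Finset.card

theorem indep_iff_card_le (L : ι → Submodule K V) (S : Finset ι) :
    Indep K L S ↔ ∀ T ⊆ S, T.card ≤ Module.finrank K ↥(T.sup L) := by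
  simp [Indep, defect]

/-- A subspace of dimension at least two is the sum of two proper subspaces: a line in it and
a complement of that line. -/
theorem exists_sup_eq_of_one_lt_finrank (W : Submodule K V)
    (hW : 1 < Module.finrank K W) : ∃ A B : Submodule K V, A < W ∧ B < W ∧ A ⊔ B = W := by
  have hne : W ≠ ⊥ := by
    rintro rfl
    simp at hW
  obtain ⟨x, hx, hx0⟩ := W.exists_mem_ne_zero_of_ne_bot hne
  have hle : Submodule.span K {x} ≤ W := by simpa using hx
  obtain ⟨C, hC⟩ := Submodule.exists_isCompl (Submodule.span K {x})
  refine ⟨Submodule.span K {x}, C ⊓ W, lt_of_le_of_ne hle ?_,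
    lt_of_le_of_ne inf_le_right ?_, ?_⟩
  · intro h
    rw [← h, finrank_span_singleton hx0] at hW
    exact lt_irrefl _ hW
  · intro h
    have hxC : x ∈ C := (inf_eq_right.mp h) hx
    exact hx0 (Submodule.disjoint_def.mp hC.disjoint x (Submodule.mem_span_singleton_self x) hxC)
  · rw [← sup_inf_assoc_of_le C hle, hC.sup_eq_top, top_inf_eq]

open Classical in
/-- If replacing `L i` by `A` destroys independence, the violating set contains `i`; here it is
`insert i T`. -/
theorem exists_of_not_indep_update (L : ι → Submodule K V) (S : Finset ι)
    (h : Indep K L S) (i : ι) (A : Submodule K V)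
    (hA : ¬ Indep K (Function.update L i A) S) :
    ∃ T ⊆ S, i ∉ T ∧ Module.finrank K ↥(T.sup L ⊔ A) ≤ T.card := by
  rw [indep_iff_card_le] at h hA
  push Not at hA
  obtain ⟨T, hTS, hT⟩ := hA
  have hsup : ∀ U : Finset ι, i ∉ U → U.sup (Function.update L i A) = U.sup L := by
    intro U hU
    refine Finset.sup_congr rfl fun j hj => ?_
    rw [Function.update_of_ne]
    rintro rfl
    exact hU hj
  by_cases hi : i ∈ T
  · refine ⟨T.erase i, (T.erase_subset i).trans hTS, T.notMem_erase i, ?_⟩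
    rw [← Finset.insert_erase hi, Finset.sup_insert, hsup _ (T.notMem_erase i),
      Function.update_self, Finset.card_insert_of_notMem (T.notMem_erase i), sup_comm] at hT
    omega
  · rw [hsup T hi] at hT
    exact absurd (h T hTS) (not_le.mpr hT)

open Classical in
/-- The exchange step of Rado's theorem: independence survives replacing `L i = A ⊔ B` by one of
the two summands. -/
theorem indep_update_or [FiniteDimensional K V] (L : ι → Submodule K V) (S : Finset ι)
    (h : Indep K L S) (i : ι) (hi : i ∈ S) (A B : Submodule K V) (hAB : A ⊔ B = L i) :
    Indep K (Function.update L i A) S ∨ Indep K (Function.update L i B) S := by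
  by_contra! hcon
  obtain ⟨T, hTS, hiT, hT⟩ := exists_of_not_indep_update K L S h i A hcon.1
  obtain ⟨U, hUS, hiU, hU⟩ := exists_of_not_indep_update K L S h i B hcon.2
  rw [indep_iff_card_le] at h
  have hdim := Submodule.finrank_sup_add_finrank_inf_eq (T.sup L ⊔ A) (U.sup L ⊔ B)
  have hsup : (insert i (T ∪ U)).sup L ≤ (T.sup L ⊔ A) ⊔ (U.sup L ⊔ B) := by
    rw [Finset.sup_insert, Finset.sup_union, ← hAB, sup_sup_sup_comm, sup_comm A, sup_comm B]
  have hinf : (T ∩ U).sup L ≤ (T.sup L ⊔ A) ⊓ (U.sup L ⊔ B) :=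
    le_inf ((Finset.sup_mono Finset.inter_subset_left).trans le_sup_left)
      ((Finset.sup_mono Finset.inter_subset_right).trans le_sup_left)
  have h1 := (h _ (Finset.insert_subset hi (Finset.union_subset hTS hUS))).trans
    (Submodule.finrank_mono hsup)
  have h2 := (h _ (Finset.inter_subset_left.trans hTS)).trans (Submodule.finrank_mono hinf)
  rw [Finset.card_insert_of_notMem (by simp [hiT, hiU])] at h1
  have hcard := Finset.card_union_add_card_inter T U
  omega

/-- If `S` is independent and every `L i` has dimension at most one, spanning vectors of the `L i`
are linearly independent, since `|S| ≤ dim ⟨S⟩`. -/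
theorem exists_linearIndependent_of_finrank_le_one [FiniteDimensional K V]
    (L : ι → Submodule K V) (S : Finset ι) (h : Indep K L S)
    (h1 : ∀ i ∈ S, Module.finrank K (L i) ≤ 1) :
    ∃ v : ι → V, (∀ i ∈ S, v i ∈ L i) ∧ LinearIndependent K fun i : S => v i.1 := by
  have hspan : ∀ i, ∃ x : V, i ∈ S → x ∈ L i ∧ L i ≤ Submodule.span K {x} := by
    intro i
    by_cases hi : i ∈ S
    · obtain ⟨x, hx⟩ := finrank_le_one_iff.mp (h1 i hi)
      refine ⟨x, fun _ => ⟨x.2, fun w hw => ?_⟩⟩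
      obtain ⟨c, hc⟩ := hx ⟨w, hw⟩
      exact Submodule.mem_span_singleton.mpr ⟨c, congrArg Subtype.val hc⟩
    · exact ⟨0, fun h => absurd h hi⟩
  choose v hv using hspan
  refine ⟨v, fun i hi => (hv i hi).1, ?_⟩
  rw [linearIndependent_iff_card_le_finrank_span, Fintype.card_coe]
  refine ((indep_iff_card_le K L S).mp h S subset_rfl).trans (Submodule.finrank_mono ?_)
  refine Finset.sup_le fun i hi => (hv i hi).2.trans (Submodule.span_mono ?_)
  rintro _ rfl
  exact ⟨⟨i, hi⟩, rfl⟩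

open Classical in
/-- The hard direction of Rado's theorem, by strong induction on the total dimension of the `L i`. -/
theorem exists_linearIndependent_of_indep [FiniteDimensional K V] (S : Finset ι) (n : ℕ) :
    ∀ L : ι → Submodule K V, ∑ i ∈ S, Module.finrank K (L i) = n → Indep K L S →
      ∃ v : ι → V, (∀ i ∈ S, v i ∈ L i) ∧ LinearIndependent K fun i : S => v i.1 := by
  induction n using Nat.strong_induction_on with
  | _ n ih =>
    intro L hn h
    by_cases h1 : ∀ i ∈ S, Module.finrank K (L i) ≤ 1
    · exact exists_linearIndependent_of_finrank_le_one K L S h h1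
    push Not at h1
    obtain ⟨i, hi, hdim⟩ := h1
    obtain ⟨A, B, hA, hB, hAB⟩ := exists_sup_eq_of_one_lt_finrank K (L i) hdim
    have step : ∀ C < L i, Indep K (Function.update L i C) S →
        ∃ v : ι → V, (∀ i ∈ S, v i ∈ L i) ∧ LinearIndependent K fun i : S => v i.1 := by
      intro C hC hind
      have hle : ∀ j, Function.update L i C j ≤ L j :=
        update_le_iff.mpr ⟨hC.le, fun _ _ => le_rfl⟩
      have hlt : ∑ j ∈ S, Module.finrank K (Function.update L i C j) < n := by
        rw [← hn]
        refine Finset.sum_lt_sum (fun j _ => Submodule.finrank_mono (hle j)) ⟨i, hi, ?_⟩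
        rw [Function.update_self]
        exact Submodule.finrank_lt_finrank_of_lt hC
      obtain ⟨v, hv, hli⟩ := ih _ hlt _ rfl hind
      exact ⟨v, fun j hj => hle j (hv j hj), hli⟩
    exact (indep_update_or K L S h i hi A B hAB).elim (step A hA) (step B hB)

/-- `S` is linearly independent iff there is a family of vectors
`v i ∈ L i` for `i ∈ S` that is linearly independent in `V`. -/
theorem statement0 [FiniteDimensional K V] (L : ι → Submodule K V) (S : Finset ι) :
    Indep K L S ↔
      ∃ v : ι → V, (∀ i ∈ S, v i ∈ L i) ∧ LinearIndependent K fun i : S => v i.1 := by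
  refine ⟨exists_linearIndependent_of_indep K S _ L rfl, ?_⟩
  rintro ⟨v, hv, hli⟩
  rw [indep_iff_card_le]
  intro T hT
  have hliT : LinearIndependent K fun i : T => v i.1 :=
    hli.comp (fun i : T => (⟨i.1, hT i.2⟩ : S)) fun i j hij =>
      Subtype.ext (congrArg (fun k : S => k.1) hij)
  rw [← Fintype.card_coe T, ← finrank_span_eq_card hliT]
  refine Submodule.finrank_mono (Submodule.span_le.mpr ?_)
  rintro _ ⟨i, rfl⟩
  exact Finset.le_sup (f := L) i.2 (hv i.1 (hT i.2))

end Mink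
end

section
/- The linearly independent subsets of E satisfy the matroid augmentation axiom: if S and S' are linearly independent subsets of E with |S'| < |S|, then there exists an index i ∈ S ∖ S' such that S' ∪ {i} is linearly independent. Together with the (evident) hereditary property, the linearly independent subsets are therefore the independent sets of a matroid on E (the Minkowski matroid). -/
/-!
The augmentation axiom rests on two properties of an independent family `S'`.

* Submodularity of the defect: `δ(A ∪ B) + δ(A ∩ B) ≤ δ(A) + δ(B)`, so the subsets of `S'` of
  defect zero are closed under union (`defect_sup_le_zero`).
* If `S' ∪ {i}` is dependent, then `L i` lies in the span of a defect-zero subset of `S'`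
  (`exists_tight_of_not_indep_insert`).

If no `i ∈ S \ S'` extends `S'`, the union of the resulting defect-zero sets is a single `T ⊆ S'`
with `dim ⟨T⟩ = |T|` and `L i ≤ ⟨T⟩` for every `i ∈ S \ S'`. The subset `(S \ S') ∪ (S ∩ T)` of
`S` spans a subspace of `⟨T⟩`, so independence of `S` gives
`|S \ S'| + |S ∩ T| ≤ |T| ≤ |S ∩ T| + |S' \ S|`, that is, `|S| ≤ |S'|`.
-/

namespace Mink

variable (K : Type*) [Field K] {V : Type*} [AddCommGroup V] [Module K V] {ι : Type*}

theorem defect_union_add_inter_le [FiniteDimensional K V] [DecidableEq ι]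
    (L : ι → Submodule K V) (A B : Finset ι) :
    defect K L (A ∪ B) + defect K L (A ∩ B) ≤ defect K L A + defect K L B := by
  have h1 := Submodule.finrank_sup_add_finrank_inf_eq (A.sup L) (B.sup L)
  have h2 : Module.finrank K ↥((A ∩ B).sup L) ≤ Module.finrank K ↥(A.sup L ⊓ B.sup L) :=
    Submodule.finrank_mono (le_inf (Finset.sup_mono Finset.inter_subset_left)
      (Finset.sup_mono Finset.inter_subset_right))
  have h3 := Finset.card_union_add_card_inter A B
  unfold defect
  rw [Finset.sup_union]
  omega

/-- Inside an independent family, defect-zero subsets are closed under finite unions. Zero defect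
is written as `δ ≤ 0`, the reverse inequality being part of independence. -/
theorem defect_sup_le_zero [FiniteDimensional K V] [DecidableEq ι]
    (L : ι → Submodule K V) {S' : Finset ι} (hS' : Indep K L S') (R : Finset ι)
    (T : ι → Finset ι) (hT : ∀ i ∈ R, T i ⊆ S' ∧ defect K L (T i) ≤ 0) :
    R.sup T ⊆ S' ∧ defect K L (R.sup T) ≤ 0 := by
  refine Finset.sup_induction (p := fun A => A ⊆ S' ∧ defect K L A ≤ 0) ?_ ?_ hT
  · simp [defect]
  · rintro A ⟨hA, hA0⟩ B ⟨hB, hB0⟩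
    refine ⟨Finset.union_subset hA hB, ?_⟩
    have h1 := defect_union_add_inter_le K L A B
    have h2 := hS' (A ∩ B) (Finset.inter_subset_left.trans hA)
    change defect K L (A ∪ B) ≤ 0
    omega

theorem exists_tight_of_not_indep_insert [FiniteDimensional K V] [DecidableEq ι]
    (L : ι → Submodule K V) {S' : Finset ι} (hS' : Indep K L S') {i : ι}
    (hi : ¬ Indep K L (insert i S')) :
    ∃ T, (T ⊆ S' ∧ defect K L T ≤ 0) ∧ L i ≤ T.sup L := by
  unfold Indep at hi
  push Not at hi
  obtain ⟨U, hU, hneg⟩ := hi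
  have hiU : i ∈ U := by
    by_contra h
    have := hS' U ((Finset.subset_insert_iff_of_notMem h).1 hU)
    omega
  have hsub : U.erase i ⊆ S' := Finset.subset_insert_iff.1 hU
  have hle : (U.erase i).sup L ≤ U.sup L := Finset.sup_mono (Finset.erase_subset i U)
  have hnonneg := hS' _ hsub
  have hmono := Submodule.finrank_mono hle
  have hcard := Finset.card_erase_add_one hiU
  unfold defect at hneg hnonneg
  -- `|U| - 1 ≤ dim ⟨U \ {i}⟩ ≤ dim ⟨U⟩ ≤ |U| - 1`, so both spans coincide.
  have heq : (U.erase i).sup L = U.sup L := Submodule.eq_of_le_of_finrank_le hle (by omega)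
  refine ⟨U.erase i, ⟨hsub, ?_⟩, ?_⟩
  · unfold defect
    rw [heq]
    omega
  · rw [heq]
    exact Finset.le_sup hiU

theorem indep_augment [FiniteDimensional K V] [DecidableEq ι]
    (L : ι → Submodule K V) (S S' : Finset ι) (hS : Indep K L S) (hS' : Indep K L S')
    (hlt : S'.card < S.card) : ∃ i ∈ S \ S', Indep K L (insert i S') := by
  by_contra! hcon
  have hex : ∀ i ∈ S \ S', ∃ T, (T ⊆ S' ∧ defect K L T ≤ 0) ∧ L i ≤ T.sup L :=
    fun i hi => exists_tight_of_not_indep_insert K L hS' (hcon i hi)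
  choose! F hF hLF using hex
  obtain ⟨hTS', hT0⟩ := defect_sup_le_zero K L hS' (S \ S') F hF
  have hLT : ∀ i ∈ S \ S', L i ≤ ((S \ S').sup F).sup L := fun i hi =>
    (hLF i hi).trans (Finset.sup_mono (Finset.le_sup (f := F) hi))
  generalize (S \ S').sup F = T at hTS' hT0 hLT
  have hW : ((S \ S') ∪ (S ∩ T)).sup L ≤ T.sup L := by
    rw [Finset.sup_union]
    exact sup_le (Finset.sup_le hLT) (Finset.sup_mono Finset.inter_subset_right)
  have hdim := Submodule.finrank_mono hW
  have hind := hS ((S \ S') ∪ (S ∩ T))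
    (Finset.union_subset Finset.sdiff_subset Finset.inter_subset_left)
  have hdisj : Disjoint (S \ S') (S ∩ T) :=
    Finset.disjoint_of_subset_right (Finset.inter_subset_right.trans hTS') Finset.sdiff_disjoint
  have hcard := Finset.card_union_of_disjoint hdisj
  have hTcard : (T \ S).card ≤ (S' \ S).card :=
    Finset.card_le_card (Finset.sdiff_subset_sdiff hTS' subset_rfl)
  have h1 := Finset.card_sdiff_add_card_inter T S
  have h2 := Finset.card_sdiff_add_card_inter S S'
  have h3 := Finset.card_sdiff_add_card_inter S' S
  rw [Finset.inter_comm T S] at h1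
  rw [Finset.inter_comm S' S] at h3
  unfold defect at hT0 hind
  omega

theorem indep_mono (L : ι → Submodule K V) (S S' : Finset ι) (hS : Indep K L S)
    (h : S' ⊆ S) : Indep K L S' :=
  fun T hT => hS T (hT.trans h)

theorem indep_empty (L : ι → Submodule K V) : Indep K L ∅ := by
  intro T hT
  simp [Finset.subset_empty.1 hT, defect]

/-- the linearly independent subsets satisfy the augmentation axiom and the
hereditary property, hence they are the independent sets of a matroid on `E`. -/
theorem statement1 [FiniteDimensional K V] [Fintype ι] [DecidableEq ι]
    (L : ι → Submodule K V) :
    (∀ S S' : Finset ι, Indep K L S → Indep K L S' → S'.card < S.card →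
        ∃ i ∈ S \ S', Indep K L (insert i S')) ∧
    (∀ S S' : Finset ι, Indep K L S → S' ⊆ S → Indep K L S') ∧
    ∃ M : Matroid ι, M.E = Set.univ ∧ ∀ S : Finset ι, M.Indep ↑S ↔ Indep K L S := by
  refine ⟨indep_augment K L, indep_mono K L, ?_⟩
  refine ⟨(IndepMatroid.ofFinset Set.univ (Indep K L) (indep_empty K L)
    (fun I J hJ hIJ => indep_mono K L J I hJ hIJ) (fun I J hI hJ hlt => ?_)
    (fun _ _ => Set.subset_univ _)).matroid, rfl, fun S => ?_⟩
  · obtain ⟨i, hi, h⟩ := indep_augment K L J I hJ hI hlt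
    rw [Finset.mem_sdiff] at hi
    exact ⟨i, hi.1, hi.2, h⟩
  · rw [IndepMatroid.matroid_Indep, IndepMatroid.ofFinset_indep]

end Mink
end

section
/- Let S ⊆ E be a BK-set and H ⊆ E ∖ S. Then the quotient tuple of H by S (the family (π(L_i))_{i ∈ H} in V/⟨S⟩) is linearly independent if and only if S ∪ H is a linearly independent subset of E. Consequently, the Minkowski matroid of the quotient tuple of E by S equals the contraction of the Minkowski matroid of E by S. -/
/-!
Quotienting by `⟨S⟩` gives `δ_{V/⟨S⟩}(T) = δ(S ∪ T) - δ(S)` for `T` disjoint from `S`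
(`defect_quotient`), and `δ(S) = 0` for a BK-set. So the quotient tuple of `H` is independent
exactly when `δ(S ∪ T) ≥ 0` for all `T ⊆ H`, which certainly holds if `S ∪ H` is independent.
Conversely, submodularity of the defect (`defect_union_add_defect_inter_le`) gives
`δ(U) ≥ δ(S ∪ U) + δ(S ∩ U)` for every `U ⊆ S ∪ H`, and both terms are non-negative. The
description of the contraction follows by taking `J = S ∪ H`.
-/

namespace Mink

variable (K : Type*) [Field K] {V : Type*} [AddCommGroup V] [Module K V] {ι : Type*}

/-- The span of the projected subspaces has dimension `dim ⟨P, T⟩ - dim P`. -/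
theorem finrank_sup_map_mkQ [FiniteDimensional K V] (L : ι → Submodule K V)
    (P : Submodule K V) (T : Finset ι) :
    Module.finrank K ↥(T.sup fun i => (L i).map P.mkQ) + Module.finrank K ↥P =
      Module.finrank K ↥(P ⊔ T.sup L) := by
  have hmap : (T.sup fun i => (L i).map P.mkQ) = (P ⊔ T.sup L).map P.mkQ := by
    rw [Submodule.map_sup, Submodule.mkQ_map_self, bot_sup_eq]
    exact (Finset.apply_sup_eq_sup_comp (Submodule.map P.mkQ)
      (fun _ _ => Submodule.map_sup _ _ _) (Submodule.map_bot _)).symm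
  have hker : Module.finrank K ↥(LinearMap.ker (P.mkQ.domRestrict (P ⊔ T.sup L))) =
      Module.finrank K ↥P := by
    rw [LinearMap.ker_domRestrict, Submodule.ker_mkQ]
    exact (Submodule.comapSubtypeEquivOfLe le_sup_left).finrank_eq
  rw [hmap, ← LinearMap.range_domRestrict, ← hker]
  exact LinearMap.finrank_range_add_finrank_ker _

/-- For `T` disjoint from `S`, passing to the quotient by `S` lowers the defect of `S ∪ T`
by exactly the defect of `S`. -/
theorem defect_quotient [FiniteDimensional K V] [DecidableEq ι]
    (L : ι → Submodule K V) (S T : Finset ι) (hT : Disjoint T S) :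
    defect K (fun i => (L i).map (S.sup L).mkQ) T = defect K L (S ∪ T) - defect K L S := by
  have h := finrank_sup_map_mkQ K L (S.sup L) T
  have hc := Finset.card_union_of_disjoint hT.symm
  unfold defect
  rw [Finset.sup_union]
  omega

/-- The defect is submodular, because the dimension is modular and
`⟨S ∩ T⟩ ⊆ ⟨S⟩ ∩ ⟨T⟩`. -/
theorem defect_union_add_defect_inter_le [FiniteDimensional K V] [DecidableEq ι]
    (L : ι → Submodule K V) (S T : Finset ι) :
    defect K L (S ∪ T) + defect K L (S ∩ T) ≤ defect K L S + defect K L T := by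
  have h := Submodule.finrank_sup_add_finrank_inf_eq (S.sup L) (T.sup L)
  have hle : (S ∩ T).sup L ≤ S.sup L ⊓ T.sup L :=
    le_inf (Finset.sup_mono Finset.inter_subset_left) (Finset.sup_mono Finset.inter_subset_right)
  have hi := Submodule.finrank_mono hle
  have hc := Finset.card_union_add_card_inter S T
  unfold defect
  rw [Finset.sup_union]
  omega

theorem indep_quotient_iff [FiniteDimensional K V] [DecidableEq ι]
    (L : ι → Submodule K V) (S : Finset ι) (hS : BKSet K L S) (H : Finset ι)
    (hH : Disjoint H S) :
    (∀ T ⊆ H, 0 ≤ defect K (fun i => (L i).map (S.sup L).mkQ) T) ↔ Indep K L (S ∪ H) := by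
  have hq : ∀ T ⊆ H,
      defect K (fun i => (L i).map (S.sup L).mkQ) T = defect K L (S ∪ T) := fun T hT => by
    rw [defect_quotient K L S T (Finset.disjoint_of_subset_left hT hH), hS.2, sub_zero]
  constructor
  · intro h U hU
    -- Submodularity bounds `δ(U) = δ(S) + δ(U)` below by `δ(S ∪ U) + δ(S ∩ U)`.
    have hUH : U \ S ⊆ H := sdiff_le_iff.mpr hU
    have h1 : 0 ≤ defect K L (S ∪ U) := by
      rw [← Finset.union_sdiff_self_eq_union, ← hq _ hUH]
      exact h _ hUH
    have h2 := hS.1 (S ∩ U) Finset.inter_subset_left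
    have h3 := defect_union_add_defect_inter_le K L S U
    have h4 := hS.2
    omega
  · intro h T hT
    rw [hq T hT]
    exact h _ (Finset.union_subset_union_right hT)

/-- for a BK-set `S` and `H ⊆ E \ S`, the quotient tuple of `H` by `S`
is linearly independent iff `S ∪ H` is linearly independent; consequently, the
Minkowski matroid of the quotient tuple of `E` by `S` is the contraction of the
Minkowski matroid of `E` by `S`. -/
theorem statement3 [FiniteDimensional K V] [Fintype ι] [DecidableEq ι]
    (L : ι → Submodule K V) (S : Finset ι) (hS : BKSet K L S) :
    (∀ H : Finset ι, Disjoint H S →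
        ((∀ T ⊆ H, 0 ≤ defect K (fun i => (L i).map (S.sup L).mkQ) T) ↔
          Indep K L (S ∪ H))) ∧
    (∀ H : Finset ι, Disjoint H S →
        ((∀ T ⊆ H, 0 ≤ defect K (fun i => (L i).map (S.sup L).mkQ) T) ↔
          ∃ J : Finset ι, Indep K L J ∧ S ⊆ J ∧ H = J \ S)) := by
  refine ⟨fun H hH => indep_quotient_iff K L S hS H hH, fun H hH => ?_⟩
  rw [indep_quotient_iff K L S hS H hH]
  constructor
  · intro h
    exact ⟨S ∪ H, h, Finset.subset_union_left, (Finset.union_sdiff_cancel_left hH.symm).symm⟩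
  · rintro ⟨J, hJ, hSJ, rfl⟩
    rwa [Finset.union_sdiff_of_subset hSJ]

end Mink
end

section
/- If B ⊆ E is a basis (a maximal-by-inclusion linearly independent subset), then ⟨B⟩ = ⟨E⟩, i.e. the linear span of the basis equals the linear span of the whole tuple. -/
/-!
If `i ∉ B`, maximality makes `B ∪ {i}` dependent, so some `T ⊆ B ∪ {i}` has `dim ⟨T⟩ < |T|`.
Put `T' = T \ {i} ⊆ B`. Since `B` is independent, `|T'| ≤ dim ⟨T'⟩ ≤ dim ⟨T⟩ ≤ |T| - 1 ≤ |T'|`,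
so `⟨T'⟩ = ⟨T⟩` by dimension. Independence of `B` also forces `i ∈ T`, whence
`L i ⊆ ⟨T⟩ = ⟨T'⟩ ⊆ ⟨B⟩`.
-/

namespace Mink

variable (K : Type*) [Field K] {V : Type*} [AddCommGroup V] [Module K V] {ι : Type*}

/-- if `B` is a basis, then `⟨B⟩ = ⟨E⟩`. -/
theorem statement7 [FiniteDimensional K V] [Fintype ι] (L : ι → Submodule K V)
    (B : Finset ι) (hB : IsBasisSet K L B) :
    B.sup L = (Finset.univ : Finset ι).sup L := by
  classical
  refine le_antisymm (Finset.sup_mono (Finset.subset_univ B)) (Finset.sup_le fun i _ => ?_)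
  by_cases hi : i ∈ B
  · exact Finset.le_sup hi
  have hdep : ¬ Indep K L (insert i B) := fun h =>
    hi (hB.2 _ h (Finset.subset_insert i B) ▸ Finset.mem_insert_self i B)
  simp only [Indep, not_forall, not_le] at hdep
  obtain ⟨T, hT, hneg⟩ := hdep
  have hT'B : T.erase i ⊆ B := Finset.subset_insert_iff.mp hT
  have hiT : i ∈ T := by
    by_contra h
    rw [Finset.erase_eq_of_notMem h] at hT'B
    exact absurd (hB.1 T hT'B) (not_le.mpr hneg)
  have hpos := hB.1 _ hT'B
  have hcard := Finset.card_erase_add_one hiT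
  unfold defect at hneg hpos
  have heq : (T.erase i).sup L = T.sup L :=
    Submodule.eq_of_le_of_finrank_le (Finset.sup_mono (Finset.erase_subset i T)) (by omega)
  calc L i ≤ T.sup L := Finset.le_sup hiT
    _ = (T.erase i).sup L := heq.symm
    _ ≤ B.sup L := Finset.sup_mono hT'B

end Mink
end

section
/- All bases of E have the same defect, and this common defect is non-negative: if B and B' are maximal-by-inclusion linearly independent subsets of E, then δ(B) = δ(B') ≥ 0. -/
/-!
All bases have the same span and the same cardinality, hence the same defect; non-negativity is
part of independence.

Call `T ⊆ B` tight when its defect is `0`. If `B` is a basis and `e ∉ B`, then a subset of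
`B ∪ {e}` of negative defect is `T ∪ {e}` for some tight `T ⊆ B` with `L e ≤ ⟨T⟩`
(`exists_tight`). By submodularity of the dimension, a union of two tight subsets of an
independent set is tight (`tight_union`), so a basis `B` contains a single tight `T` whose span
contains `L e` for every `e ∉ B` (`exists_tight_all`). This shows `⟨B⟩ = ⟨E⟩`. If `S` is any
independent set, the members of `S` outside `B \ T` span a subspace of `⟨T⟩`, so
there are at most `dim ⟨T⟩ = |T|` of them, and `|S| ≤ |B \ T| + |T| = |B|`
(`card_le_of_isBasisSet`).
-/

namespace Mink

variable (K : Type*) [Field K] {V : Type*} [AddCommGroup V] [Module K V] {ι : Type*}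

open Classical in
/-- If the basis `B` does not contain `e`, the dependence of `B ∪ {e}` is caused by a subset of
defect `0` whose span already contains `L e`. -/
theorem exists_tight [FiniteDimensional K V] (L : ι → Submodule K V) {B : Finset ι}
    (hB : IsBasisSet K L B) {e : ι} (he : e ∉ B) :
    ∃ T ⊆ B, defect K L T = 0 ∧ L e ≤ T.sup L := by
  have hdep : ¬ Indep K L (insert e B) := fun h =>
    he (hB.2 _ h (Finset.subset_insert e B) ▸ Finset.mem_insert_self e B)
  unfold Indep at hdep
  push Not at hdep
  obtain ⟨S, hS, hneg⟩ := hdep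
  have heS : e ∈ S := by
    by_contra h
    have := hB.1 S ((Finset.subset_insert_iff_of_notMem h).1 hS)
    omega
  have hTB : S.erase e ⊆ B := Finset.subset_insert_iff.1 hS
  have hT := hB.1 _ hTB
  have hsup : S.sup L = L e ⊔ (S.erase e).sup L := by
    rw [← Finset.sup_insert, Finset.insert_erase heS]
  have hcard := Finset.card_erase_add_one heS
  have hle : (S.erase e).sup L ≤ S.sup L := hsup ▸ le_sup_right
  have hfin := Submodule.finrank_mono hle
  unfold defect at hneg hT
  refine ⟨S.erase e, hTB, by unfold defect; omega, ?_⟩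
  have heq : (S.erase e).sup L = S.sup L :=
    Submodule.eq_of_le_of_finrank_le hle (by omega)
  rw [heq, hsup]
  exact le_sup_left

open Classical in
theorem tight_union [FiniteDimensional K V] (L : ι → Submodule K V) {B : Finset ι}
    (hB : Indep K L B) {U W : Finset ι} (hU : U ⊆ B) (hW : W ⊆ B)
    (hU0 : defect K L U = 0) (hW0 : defect K L W = 0) : defect K L (U ∪ W) = 0 := by
  have h1 := hB _ (Finset.union_subset hU hW)
  have h2 := hB (U ∩ W) (Finset.inter_subset_left.trans hU)
  have h3 := Submodule.finrank_sup_add_finrank_inf_eq (U.sup L) (W.sup L)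
  have h4 : (U ∩ W).sup L ≤ U.sup L ⊓ W.sup L :=
    le_inf (Finset.sup_mono Finset.inter_subset_left) (Finset.sup_mono Finset.inter_subset_right)
  have h5 := Submodule.finrank_mono h4
  have h6 := Finset.card_union_add_card_inter U W
  unfold defect at *
  rw [Finset.sup_union] at *
  omega

open Classical in
/-- A basis has a subset of defect `0` (the union of all such subsets) whose span contains every
`L e` with `e` outside the basis. -/
theorem exists_tight_all [FiniteDimensional K V] (L : ι → Submodule K V) {B : Finset ι}
    (hB : IsBasisSet K L B) :
    ∃ T ⊆ B, defect K L T = 0 ∧ ∀ e ∉ B, L e ≤ T.sup L := by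
  set F := B.powerset.filter fun T => defect K L T = 0 with hF
  have hT : F.sup id ⊆ B ∧ defect K L (F.sup id) = 0 := by
    refine Finset.sup_induction (p := fun T => T ⊆ B ∧ defect K L T = 0) ?_ ?_ ?_
    · simp [defect]
    · rintro U ⟨hU, hU0⟩ W ⟨hW, hW0⟩
      exact ⟨Finset.union_subset hU hW, tight_union K L hB.1 hU hW hU0 hW0⟩
    · intro T hT
      simpa [hF] using hT
  refine ⟨F.sup id, hT.1, hT.2, fun e he => ?_⟩
  obtain ⟨T, hTB, hT0, hle⟩ := exists_tight K L hB he
  have hTF : T ∈ F := by simp [hF, hTB, hT0]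
  exact hle.trans (Finset.sup_mono (Finset.le_sup (f := id) hTF))

theorem sup_le_of_isBasisSet [FiniteDimensional K V] (L : ι → Submodule K V) {B : Finset ι}
    (hB : IsBasisSet K L B) (S : Finset ι) : S.sup L ≤ B.sup L := by
  obtain ⟨T, hTB, -, hT⟩ := exists_tight_all K L hB
  refine Finset.sup_le fun e _ => ?_
  by_cases he : e ∈ B
  · exact Finset.le_sup he
  · exact (hT e he).trans (Finset.sup_mono hTB)

open Classical in
theorem card_le_of_isBasisSet [FiniteDimensional K V] (L : ι → Submodule K V) {B S : Finset ι}
    (hB : IsBasisSet K L B) (hS : Indep K L S) : S.card ≤ B.card := by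
  obtain ⟨T, hTB, hT0, hT⟩ := exists_tight_all K L hB
  have hspan : (S \ (B \ T)).sup L ≤ T.sup L := by
    refine Finset.sup_le fun e he => ?_
    by_cases heT : e ∈ T
    · exact Finset.le_sup heT
    · refine hT e fun heB => ?_
      simp [heB, heT] at he
  have h1 := Submodule.finrank_mono hspan
  have h2 := hS (S \ (B \ T)) Finset.sdiff_subset
  have h3 := Finset.card_sdiff_add_card_eq_card hTB
  have h4 := Finset.card_le_card_sdiff_add_card (s := S) (t := B \ T)
  unfold defect at h2 hT0
  omega

/-- all bases of `E` have the same defect, and this defect is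
non-negative. -/
theorem statement8 [FiniteDimensional K V] [Fintype ι] (L : ι → Submodule K V)
    (B B' : Finset ι) (hB : IsBasisSet K L B) (hB' : IsBasisSet K L B') :
    defect K L B = defect K L B' ∧ 0 ≤ defect K L B := by
  have hspan : B.sup L = B'.sup L :=
    le_antisymm (sup_le_of_isBasisSet K L hB' B) (sup_le_of_isBasisSet K L hB B')
  have hcard : B.card = B'.card :=
    le_antisymm (card_le_of_isBasisSet K L hB' hB.1) (card_le_of_isBasisSet K L hB hB'.1)
  exact ⟨by unfold defect; rw [hspan, hcard], hB.1 B subset_rfl⟩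

end Mink
end

section
/- If E is a linearly independent tuple and S, T ⊆ E are BK-sets, then both S ∪ T and S ∩ T are BK-sets. -/
/-!
The defect is submodular: `⟨S ∪ T⟩ = ⟨S⟩ + ⟨T⟩` and `⟨S ∩ T⟩ ⊆ ⟨S⟩ ∩ ⟨T⟩`, so the dimension formula
gives `δ(S ∪ T) + δ(S ∩ T) ≤ δ(S) + δ(T)`. When `S` and `T` are BK-sets the right-hand side is `0`,
while both terms on the left are non-negative by independence of the whole tuple; hence both vanish.
-/

namespace Mink

variable (K : Type*) [Field K] {V : Type*} [AddCommGroup V] [Module K V] {ι : Type*}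

/-- if the tuple `E` is linearly independent and `S`, `T` are BK-sets,
then `S ∪ T` and `S ∩ T` are BK-sets. -/
theorem statement10 [FiniteDimensional K V] [Fintype ι] [DecidableEq ι]
    (L : ι → Submodule K V) (hE : Indep K L (Finset.univ : Finset ι))
    (S T : Finset ι) (hS : BKSet K L S) (hT : BKSet K L T) :
    BKSet K L (S ∪ T) ∧ BKSet K L (S ∩ T) := by
  have hsub := defect_union_add_defect_inter_le K L S T
  have hunion := hE (S ∪ T) (Finset.subset_univ _)
  have hinter := hE (S ∩ T) (Finset.subset_univ _)
  rw [hS.2, hT.2] at hsub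
  exact ⟨⟨fun A _ => hE A (Finset.subset_univ A), by omega⟩,
    ⟨fun A _ => hE A (Finset.subset_univ A), by omega⟩⟩

end Mink
end

section
/- If the tuple E is linearly dependent, then the unique maximal-by-inclusion BK-sets contained in the bases of E all have the same cardinality: if B and B' are bases of E with maximal BK-subsets S ⊆ B and S' ⊆ B', then |S| = |S'|. -/
/-!
For a basis `B` with maximal BK-subset `S`, put `F = S ∪ Bᶜ`. If `e ∉ B`, then `insert e B` has a
subset of negative defect; removing `e` from it leaves a BK-subset of `B` whose span contains `L e`
(`IsBasisSet.exists_bkSet`). BK-subsets of `B` are closed under union by submodularity of the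
defect, so they all lie in `S` (`BKSet.subset_of_maximal`), and hence `⟨F⟩ = ⟨S⟩`. Therefore
`δ(F) = -|Bᶜ|`, whereas `δ(T) ≥ δ(T ∩ B) - |T \ B| ≥ -|Bᶜ|` for every `T`. Equality forces
`Bᶜ ⊆ T` and `T ∩ B` to be a BK-set, so `T ⊆ F`: thus `F` is the largest minimizer of the defect
on the subsets of `E`. This description does not involve `B`, so neither does
`|S| = dim ⟨S⟩ = dim ⟨F⟩`.
-/

namespace Mink

variable (K : Type*) [Field K] {V : Type*} [AddCommGroup V] [Module K V] {ι : Type*}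

open Classical in
theorem defect_submodular [FiniteDimensional K V] (L : ι → Submodule K V) (S T : Finset ι) :
    defect K L (S ∪ T) + defect K L (S ∩ T) ≤ defect K L S + defect K L T := by
  have h1 := Submodule.finrank_sup_add_finrank_inf_eq (S.sup L) (T.sup L)
  have h2 : Module.finrank K ↥((S ∩ T).sup L) ≤ Module.finrank K ↥(S.sup L ⊓ T.sup L) :=
    Submodule.finrank_mono (le_inf (Finset.sup_mono Finset.inter_subset_left)
      (Finset.sup_mono Finset.inter_subset_right))
  have h3 := Finset.card_union_add_card_inter S T
  unfold defect
  rw [Finset.sup_union]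
  omega

variable {K}

/-- By submodularity, BK-subsets of an independent set are closed under union, so a maximal one
is the largest. -/
theorem BKSet.subset_of_maximal [FiniteDimensional K V] {L : ι → Submodule K V}
    {B S T : Finset ι} (hB : Indep K L B) (hSB : S ⊆ B) (hS : BKSet K L S)
    (hSmax : ∀ T ⊆ B, BKSet K L T → S ⊆ T → T = S) (hTB : T ⊆ B) (hT : defect K L T = 0) :
    T ⊆ S := by
  classical
  have hU : S ∪ T ⊆ B := Finset.union_subset hSB hTB
  have h1 := defect_submodular K L S T
  have h2 := hB _ hU
  have h3 := hB (S ∩ T) (Finset.inter_subset_left.trans hSB)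
  have h4 := hS.2
  have h5 : BKSet K L (S ∪ T) := ⟨fun R hR => hB R (hR.trans hU), by omega⟩
  rw [← hSmax _ hU h5 Finset.subset_union_left]
  exact Finset.subset_union_right

/-- Every element outside a basis lies in the span of some subset of the basis of defect zero. -/
theorem IsBasisSet.exists_bkSet [FiniteDimensional K V] {L : ι → Submodule K V}
    {B : Finset ι} (hB : IsBasisSet K L B) {e : ι} (he : e ∉ B) :
    ∃ T ⊆ B, defect K L T = 0 ∧ L e ≤ T.sup L := by
  classical
  have hdep : ¬ Indep K L (insert e B) := fun h =>
    he (by rw [← hB.2 _ h (Finset.subset_insert e B)]; exact Finset.mem_insert_self e B)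
  unfold Indep at hdep
  push Not at hdep
  obtain ⟨T, hTB, hT⟩ := hdep
  have heT : e ∈ T := by
    by_contra h
    have := hB.1 T ((Finset.subset_insert_iff_of_notMem h).1 hTB)
    omega
  have hsub : T.erase e ⊆ B := Finset.subset_insert_iff.1 hTB
  have hle : (T.erase e).sup L ≤ T.sup L := Finset.sup_mono (Finset.erase_subset e T)
  have h1 := Submodule.finrank_mono hle
  have h2 := hB.1 _ hsub
  have h3 := Finset.card_erase_add_one heT
  unfold defect at hT h2
  refine ⟨T.erase e, hsub, by unfold defect; omega, ?_⟩
  rw [Submodule.eq_of_le_of_finrank_eq hle (by omega)]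
  exact Finset.le_sup heT

open Classical in
theorem sup_union_compl_eq [FiniteDimensional K V] [Fintype ι] {L : ι → Submodule K V}
    {B S : Finset ι} (hB : IsBasisSet K L B) (hSB : S ⊆ B) (hS : BKSet K L S)
    (hSmax : ∀ T ⊆ B, BKSet K L T → S ⊆ T → T = S) :
    (S ∪ Bᶜ).sup L = S.sup L := by
  rw [Finset.sup_union]
  refine sup_eq_left.2 (Finset.sup_le fun e he => ?_)
  obtain ⟨T, hTB, hT, hle⟩ := hB.exists_bkSet (Finset.mem_compl.1 he)
  exact hle.trans (Finset.sup_mono (BKSet.subset_of_maximal hB.1 hSB hS hSmax hTB hT))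

open Classical in
theorem defect_union_compl [FiniteDimensional K V] [Fintype ι] {L : ι → Submodule K V}
    {B S : Finset ι} (hB : IsBasisSet K L B) (hSB : S ⊆ B) (hS : BKSet K L S)
    (hSmax : ∀ T ⊆ B, BKSet K L T → S ⊆ T → T = S) :
    defect K L (S ∪ Bᶜ) = -(Bᶜ.card : ℤ) := by
  have h := hS.2
  unfold defect at h ⊢
  have hd : Disjoint S Bᶜ := Finset.disjoint_left.2 fun x hx hx' =>
    Finset.mem_compl.1 hx' (hSB hx)
  rw [sup_union_compl_eq hB hSB hS hSmax, Finset.card_union_of_disjoint hd]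
  omega

open Classical in
theorem defect_inter_sub_le [FiniteDimensional K V] (L : ι → Submodule K V) (B T : Finset ι) :
    defect K L (T ∩ B) - ((T \ B).card : ℤ) ≤ defect K L T := by
  have h1 : Module.finrank K ↥((T ∩ B).sup L) ≤ Module.finrank K ↥(T.sup L) :=
    Submodule.finrank_mono (Finset.sup_mono Finset.inter_subset_left)
  have h2 := Finset.card_inter_add_card_sdiff T B
  unfold defect
  omega

theorem sdiff_subset_compl_set [Fintype ι] [DecidableEq ι] (B T : Finset ι) : T \ B ⊆ Bᶜ :=
  fun _ hx => Finset.mem_compl.2 (Finset.mem_sdiff.1 hx).2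

open Classical in
theorem neg_card_compl_le_defect [FiniteDimensional K V] [Fintype ι] {L : ι → Submodule K V}
    {B : Finset ι} (hB : Indep K L B) (T : Finset ι) :
    -(Bᶜ.card : ℤ) ≤ defect K L T := by
  have h1 := defect_inter_sub_le L B T
  have h2 := hB (T ∩ B) Finset.inter_subset_right
  have h3 := Finset.card_le_card (sdiff_subset_compl_set B T)
  omega

open Classical in
/-- `S ∪ Bᶜ` contains every minimizer of the defect. -/
theorem subset_union_compl [FiniteDimensional K V] [Fintype ι] {L : ι → Submodule K V}
    {B S T : Finset ι} (hB : IsBasisSet K L B) (hSB : S ⊆ B) (hS : BKSet K L S)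
    (hSmax : ∀ T ⊆ B, BKSet K L T → S ⊆ T → T = S)
    (hT : defect K L T ≤ -(Bᶜ.card : ℤ)) : T ⊆ S ∪ Bᶜ := by
  have h1 := defect_inter_sub_le L B T
  have h2 := hB.1 (T ∩ B) Finset.inter_subset_right
  have h3 := Finset.card_le_card (sdiff_subset_compl_set B T)
  have h4 : T ∩ B ⊆ S := BKSet.subset_of_maximal hB.1 hSB hS hSmax
    Finset.inter_subset_right (by omega)
  intro x hx
  by_cases hxB : x ∈ B
  · exact Finset.mem_union_left _ (h4 (Finset.mem_inter.2 ⟨hx, hxB⟩))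
  · exact Finset.mem_union_right _ (Finset.mem_compl.2 hxB)

theorem card_le_of_maximal [FiniteDimensional K V] [Fintype ι] {L : ι → Submodule K V}
    {B B' S S' : Finset ι} (hB : IsBasisSet K L B) (hB' : IsBasisSet K L B')
    (hSB : S ⊆ B) (hS : BKSet K L S)
    (hSmax : ∀ T ⊆ B, BKSet K L T → S ⊆ T → T = S)
    (hS'B : S' ⊆ B') (hS' : BKSet K L S')
    (hS'max : ∀ T ⊆ B', BKSet K L T → S' ⊆ T → T = S') :
    S.card ≤ S'.card := by
  classical
  -- `S ∪ Bᶜ` also minimizes the defect from the point of view of `B'`.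
  have h1 := neg_card_compl_le_defect hB.1 (S' ∪ B'ᶜ)
  rw [defect_union_compl hB' hS'B hS' hS'max] at h1
  have h2 : S ∪ Bᶜ ⊆ S' ∪ B'ᶜ := subset_union_compl hB' hS'B hS' hS'max
    (by rw [defect_union_compl hB hSB hS hSmax]; exact h1)
  have h3 := Submodule.finrank_mono (Finset.sup_mono (f := L) h2)
  rw [sup_union_compl_eq hB hSB hS hSmax, sup_union_compl_eq hB' hS'B hS' hS'max] at h3
  have h4 := hS.2
  have h5 := hS'.2
  unfold defect at h4 h5
  omega

variable (K)

/-- if the tuple `E` is linearly dependent, the maximal-by-inclusion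
BK-subsets of any two bases have the same cardinality. -/
theorem statement15 [FiniteDimensional K V] [Fintype ι] (L : ι → Submodule K V)
    (hdep : ¬ Indep K L (Finset.univ : Finset ι))
    (B B' S S' : Finset ι) (hB : IsBasisSet K L B) (hB' : IsBasisSet K L B')
    (hSB : S ⊆ B) (hS : BKSet K L S)
    (hSmax : ∀ T ⊆ B, BKSet K L T → S ⊆ T → T = S)
    (hS'B : S' ⊆ B') (hS' : BKSet K L S')
    (hS'max : ∀ T ⊆ B', BKSet K L T → S' ⊆ T → T = S') :
    S.card = S'.card := by
  exact le_antisymm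
    (card_le_of_maximal hB hB' hSB hS hSmax hS'B hS' hS'max)
    (card_le_of_maximal hB' hB hS'B hS' hS'max hSB hS hSmax)

end Mink
end

section
/- For every field K and every finite partially ordered set P, there exist a finite-dimensional K-vector space V and a BK-tuple of subspaces of V indexed by (the underlying set of) P such that the BK-subsets of the tuple are exactly the lower sets (order ideals) of P; in particular, the lattice of BK-subsets of the tuple, ordered by inclusion, is order-isomorphic to the distributive lattice of lower sets of P. -/
/-!
Take `V = K^P` and let `L p` be spanned by the basis vectors `e_q` with `q ≤ p`. Then `⟨S⟩` is the
coordinate subspace on the lower closure `↓S` (`sup_supported_Iic`), so its defect is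
`|↓S| - |S| ≥ 0`. Hence every subset is linearly independent, and the defect vanishes exactly when
`↓S = S`, that is, when `S` is a lower set.
-/

namespace Mink

variable (K : Type*) [Field K] {V : Type*} [AddCommGroup V] [Module K V] {ι : Type*}

/-- The spaces of vectors supported on the principal ideals `Iic p`, `p ∈ S`, span the space of
vectors supported on the lower closure of `S`. -/
theorem sup_supported_Iic {P : Type*} [PartialOrder P] (S : Finset P) :
    (S.sup fun p => Finsupp.supported K K (Set.Iic p)) =
      Finsupp.supported K K (lowerClosure (S : Set P) : Set P) := by
  rw [Finset.sup_eq_iSup, coe_lowerClosure, Set.biUnion_eq_iUnion, Finsupp.supported_iUnion]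
  exact (iSup_subtype' ..)

theorem defect_supported_Iic {P : Type*} [Fintype P] [PartialOrder P] (S : Finset P) :
    defect K (fun p : P => Finsupp.supported K K (Set.Iic p)) S =
      ((lowerClosure (S : Set P) : Set P).ncard : ℤ) - (S : Set P).ncard := by
  classical
  rw [defect, sup_supported_Iic, (Finsupp.supportedEquivFinsupp _).finrank_eq,
    Module.finrank_finsupp_self, Set.ncard_coe_finset, ← Nat.card_eq_fintype_card,
    Nat.card_coe_set_eq]

universe u v

/-- for every field `K` and every finite poset `P`, there is a
finite-dimensional `K`-vector space `V` and a BK-tuple of subspaces of `V` indexed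
by `P` whose BK-subsets are exactly the lower sets (order ideals) of `P`. -/
theorem statement19 (K : Type u) [Field K] (P : Type v) [Fintype P] [PartialOrder P] :
    ∃ (V : Type (max u v)) (_ : AddCommGroup V) (_ : Module K V)
      (_ : FiniteDimensional K V) (L : P → Submodule K V),
      BKSet K L (Finset.univ : Finset P) ∧
      ∀ S : Finset P, BKSet K L S ↔ IsLowerSet (↑S : Set P) := by
  have indep (S : Finset P) : Indep K (fun p : P => Finsupp.supported K K (Set.Iic p)) S := by
    intro T _
    rw [defect_supported_Iic, sub_nonneg, Nat.cast_le]
    exact Set.ncard_le_ncard subset_lowerClosure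
  have bk (S : Finset P) : BKSet K (fun p : P => Finsupp.supported K K (Set.Iic p)) S ↔
      IsLowerSet (S : Set P) := by
    rw [BKSet, and_iff_right (indep S), defect_supported_Iic, sub_eq_zero, Nat.cast_inj,
      ← lowerClosure_eq]
    exact ⟨fun h => (Set.eq_of_subset_of_ncard_le subset_lowerClosure h.le).symm,
      fun h => by rw [h]⟩
  refine ⟨P →₀ K, inferInstance, inferInstance, inferInstance,
    fun p => Finsupp.supported K K (Set.Iic p), (bk _).2 ?_, bk⟩
  rw [Finset.coe_univ]
  exact isLowerSet_univ

end Mink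
end
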